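/- For every x̄ ∈ S and every i ∈ I, there exist constants D₁ ≥ 0 and D₂ ≥ 0 such that for all n ≥ 1, ‖w_n^{(i+1)} − x̄‖² ≤ ‖x_n − x̄‖² + θ_n·D₁ + 2λ_n·(f_i(x̄) − f_i(y_n^{(i)})) + 2λ_n·⟨d_{n+1}^{(i)}, y_n^{(i)} − x̄⟩ + α_n·D₂ − (1 − α_n)·‖T_i(y_n^{(i)}) − y_n^{(i)}‖² − ‖z_n − y_n^{(i)}‖², where the sequences are generated by Algorithm 2. -/

import Mathlib

open Filter Topology

theorem aux_prox {H : Type*} [NormedAddCommGroup H] [InnerProductSpace ℝ H]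
    (f : H → ℝ) (hf : ConvexOn ℝ Set.univ f) (l : ℝ) (hl : 0 < l) (p y q : H)
    (hy : ∀ v : H, f y + (1 / (2 * l)) * ‖p - y‖ ^ 2 ≤ f v + (1 / (2 * l)) * ‖p - v‖ ^ 2) :
    @inner ℝ H _ (p - y) (q - y) ≤ l * (f q - f y) := by
  have key : ∀ t : ℝ, 0 < t → t ≤ 1 →
      @inner ℝ H _ (p - y) (q - y) ≤ l * (f q - f y) + t / 2 * ‖q - y‖ ^ 2 := by
    intro t ht ht1
    have h1 := hy ((1 - t) • y + t • q)
    have h2 := hf.2 (Set.mem_univ y) (Set.mem_univ q) (by linarith : 0 ≤ 1 - t) ht.le (by ring)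
    simp only [smul_eq_mul] at h2
    have h3 : p - ((1 - t) • y + t • q) = (p - y) - t • (q - y) := by module
    rw [h3, norm_sub_sq_real (p - y) (t • (q - y)), inner_smul_right, norm_smul, Real.norm_of_nonneg ht.le] at h1
    have h4 : 0 ≤ t * (f q - f y) + (1 / (2 * l)) *
        (-2 * (t * @inner ℝ H _ (p - y) (q - y)) + (t * ‖q - y‖) ^ 2) := by linarith
    have h5 : t * (f q - f y) + (1 / (2 * l)) *
        (-2 * (t * @inner ℝ H _ (p - y) (q - y)) + (t * ‖q - y‖) ^ 2)
        = (t / l) * (l * (f q - f y) + t / 2 * ‖q - y‖ ^ 2 - @inner ℝ H _ (p - y) (q - y)) := by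
      field_simp
      ring
    rw [h5] at h4
    have := nonneg_of_mul_nonneg_right h4 (div_pos ht hl)
    linarith
  apply le_of_forall_pos_le_add
  intro e he
  have hN : 0 ≤ ‖q - y‖ ^ 2 := by positivity
  have hpos : 0 < e + ‖q - y‖ ^ 2 := by linarith
  have h1 := key (e / (e + ‖q - y‖ ^ 2)) (by positivity) ((div_le_one hpos).2 (by linarith))
  have h2 : e / (e + ‖q - y‖ ^ 2) / 2 * ‖q - y‖ ^ 2 ≤ e := by
    rw [div_div, div_mul_eq_mul_div, div_le_iff₀ (by positivity)]
    nlinarith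
  linarith

theorem aux_firm {H : Type*} [NormedAddCommGroup H] [InnerProductSpace ℝ H]
    (t y q : H) (h : ‖t - q‖ ^ 2 ≤ @inner ℝ H _ (t - q) (y - q)) :
    ‖t - q‖ ^ 2 ≤ ‖y - q‖ ^ 2 - ‖t - y‖ ^ 2 := by
  have h1 : t - y = (t - q) - (y - q) := by abel
  rw [h1, norm_sub_sq_real (t - q) (y - q)]
  linarith

theorem aux_convex {H : Type*} [NormedAddCommGroup H] [InnerProductSpace ℝ H]
    (a b : H) (s : ℝ) (h0 : 0 ≤ s) (h1 : s ≤ 1) :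
    ‖s • a + (1 - s) • b‖ ^ 2 ≤ s * ‖a‖ ^ 2 + (1 - s) * ‖b‖ ^ 2 := by
  have h := norm_sub_sq_real a b
  rw [norm_add_sq_real, inner_smul_left, inner_smul_right, norm_smul, norm_smul,
    Real.norm_of_nonneg h0, Real.norm_of_nonneg (by linarith : 0 ≤ 1 - s)]
  simp only [conj_trivial]
  have h2 : 0 ≤ s * (1 - s) * ‖a - b‖ ^ 2 := by
    have : 0 ≤ 1 - s := by linarith
    positivity
  rw [h] at h2
  nlinarith

theorem alg2_key_inequality
    {H : Type*} [NormedAddCommGroup H] [InnerProductSpace ℝ H] [CompleteSpace H]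
    (M : ℕ) (hM : 1 ≤ M)
    (f h : ℕ → H → ℝ) (h' : ℕ → H → H) (L : ℕ → ℝ) (T : ℕ → H → H)
    (hf_cont : ∀ i ∈ Finset.Icc 1 M, Continuous (f i))
    (hf_conv : ∀ i ∈ Finset.Icc 1 M, ConvexOn ℝ Set.univ (f i))
    (hh_conv : ∀ i ∈ Finset.Icc 1 M, ConvexOn ℝ Set.univ (h i))
    (hh_grad : ∀ i ∈ Finset.Icc 1 M, ∀ x : H, HasGradientAt (h i) (h' i x) x)
    (hL_pos : ∀ i ∈ Finset.Icc 1 M, 0 < L i)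
    (hh_lip : ∀ i ∈ Finset.Icc 1 M, ∀ x y : H, ‖h' i x - h' i y‖ ≤ (1 / L i) * ‖x - y‖)
    (hT_firm : ∀ i ∈ Finset.Icc 1 M, ∀ x y : H,
      ‖T i x - T i y‖ ^ 2 ≤ @inner ℝ H _ (T i x - T i y) (x - y))
    (S : Set H) (hS : S = ⋂ i ∈ Finset.Icc 1 M, {x : H | T i x = x}) (hS_ne : S.Nonempty)
    (θ lam β α : ℕ → ℝ) (σ : ℝ) (hσ : 1 ≤ σ)
    (hθ_range : ∀ n, 0 ≤ θ n ∧ θ n < 1)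
    (hlam_pos : ∀ n, 0 < lam n)
    (hlam_le : ∀ n, ∀ i ∈ Finset.Icc 1 M, lam n ≤ 2 * L i)
    (hβ_range : ∀ n, 0 < β n ∧ β n ≤ 1)
    (hα_range : ∀ n, 0 < α n ∧ α n ≤ 1)
    (hθ_anti : Antitone θ) (hlam_anti : Antitone lam)
    (hβ_anti : Antitone β) (hα_anti : Antitone α)
    (hθ_lim : Tendsto θ atTop (𝓝 0)) (hlam_lim : Tendsto lam atTop (𝓝 0))
    (hβ_lim : Tendsto β atTop (𝓝 0)) (hα_lim : Tendsto α atTop (𝓝 0))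
    (hC1 : ¬ Summable α)
    (hC2 : Tendsto (fun n => (1 / α (n+1)) * |1 / lam (n+1) - 1 / lam n|) atTop (𝓝 0))
    (hC3 : Tendsto (fun n => (1 / lam (n+1)) * |1 - α n / α (n+1)|) atTop (𝓝 0))
    (hC4 : Tendsto (fun n => α n / lam n) atTop (𝓝 0))
    (hC5 : Tendsto (fun n => θ n / (α (n+1) * lam (n+1))) atTop (𝓝 0))
    (hC6 : ∀ n, lam n / lam (n+1) ≤ σ)
    (hC7 : Tendsto (fun n => β n / α (n+1)) atTop (𝓝 0))
    (x z : ℕ → H) (w y d : ℕ → ℕ → H) (u : ℕ → H)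
    (hd1 : ∀ i ∈ Finset.Icc 1 M, d 1 i = -(h' i (z 0)))
    (hz : ∀ n ≥ 1, z n = x n + θ n • (x n - x (n-1)))
    (hd : ∀ n ≥ 1, ∀ i ∈ Finset.Icc 1 M, d (n+1) i = -(h' i (z n)) + β n • d n i)
    (hy : ∀ n ≥ 1, ∀ i ∈ Finset.Icc 1 M, ∀ v : H,
      f i (y n i) + (1 / (2 * lam n)) * ‖z n + lam n • d (n+1) i - y n i‖ ^ 2
        ≤ f i v + (1 / (2 * lam n)) * ‖z n + lam n • d (n+1) i - v‖ ^ 2)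
    (hw : ∀ n ≥ 1, ∀ i ∈ Finset.Icc 1 M,
      w n (i+1) = α n • u i + (1 - α n) • T i (y n i))
    (hx : ∀ n ≥ 1, x (n+1) = (M : ℝ)⁻¹ • ∑ i ∈ Finset.Icc 1 M, w n (i+1))
    (hy_bdd : ∀ i ∈ Finset.Icc 1 M, ∃ C, ∀ n ≥ 1, ‖y n i‖ ≤ C)
    : ∀ xb ∈ S, ∀ i ∈ Finset.Icc 1 M, ∃ D₁ ≥ (0:ℝ), ∃ D₂ ≥ (0:ℝ), ∀ n ≥ 1,
      ‖w n (i+1) - xb‖ ^ 2 ≤ ‖x n - xb‖ ^ 2 + θ n * D₁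
        + 2 * lam n * (f i xb - f i (y n i))
        + 2 * lam n * @inner ℝ H _ (d (n+1) i) (y n i - xb)
        + α n * D₂ - (1 - α n) * ‖T i (y n i) - y n i‖ ^ 2 - ‖z n - y n i‖ ^ 2 := by
  intro xb hxb i hi
  have hfix : ∀ j ∈ Finset.Icc 1 M, T j xb = xb := by
    intro j hj
    rw [hS] at hxb
    simp only [Set.mem_iInter, Set.mem_ofPred_eq] at hxb
    exact hxb j hj
  have hfirm : ∀ n, ∀ j ∈ Finset.Icc 1 M,
      ‖T j (y n j) - xb‖ ^ 2 ≤ ‖y n j - xb‖ ^ 2 - ‖T j (y n j) - y n j‖ ^ 2 := by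
    intro n j hj
    apply aux_firm
    have := hT_firm j hj (y n j) xb
    rwa [hfix j hj] at this
  choose! C hC using hy_bdd
  have hwb : ∀ n ≥ 1, ∀ j ∈ Finset.Icc 1 M, ‖w n (j + 1)‖ ≤ ‖u j‖ + (C j + ‖xb‖ + ‖xb‖) := by
    intro n hn j hj
    have h1 : ‖T j (y n j) - xb‖ ≤ ‖y n j - xb‖ := by
      apply le_of_sq_le_sq _ (norm_nonneg _)
      have := hfirm n j hj
      nlinarith [sq_nonneg ‖T j (y n j) - y n j‖]
    have h2 : ‖T j (y n j)‖ ≤ C j + ‖xb‖ + ‖xb‖ := by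
      have a1 := norm_sub_norm_le (T j (y n j)) xb
      have a2 := norm_sub_le (y n j) xb
      have a3 := hC j hj n hn
      linarith
    obtain ⟨ha0, ha1⟩ := hα_range n
    rw [hw n hn j hj]
    refine (norm_add_le _ _).trans ?_
    rw [norm_smul, norm_smul, Real.norm_of_nonneg ha0.le,
      Real.norm_of_nonneg (by linarith : 0 ≤ 1 - α n)]
    have b1 : α n * ‖u j‖ ≤ ‖u j‖ := mul_le_of_le_one_left (norm_nonneg _) ha1
    have b2 : (1 - α n) * ‖T j (y n j)‖ ≤ ‖T j (y n j)‖ :=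
      mul_le_of_le_one_left (norm_nonneg _) (by linarith)
    linarith
  obtain ⟨R, hR0, hR⟩ : ∃ R ≥ (0 : ℝ), ∀ n, ‖x n‖ ≤ R := by
    set B : ℝ := ∑ j ∈ Finset.Icc 1 M, (‖u j‖ + (C j + ‖xb‖ + ‖xb‖)) with hB
    have hBx : ∀ n ≥ 1, ‖x (n + 1)‖ ≤ B := by
      intro n hn
      rw [hx n hn, norm_smul]
      have hM' : ‖(M : ℝ)⁻¹‖ ≤ 1 := by
        rw [Real.norm_of_nonneg (by positivity)]
        exact inv_le_one_of_one_le₀ (by exact_mod_cast hM)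
      refine (mul_le_of_le_one_left (norm_nonneg _) hM').trans ?_
      exact (norm_sum_le _ _).trans (Finset.sum_le_sum fun j hj => hwb n hn j hj)
    refine ⟨‖x 0‖ + ‖x 1‖ + |B|, by positivity, ?_⟩
    have p0 := norm_nonneg (x 0)
    have p1 := norm_nonneg (x 1)
    have p2 := abs_nonneg B
    intro n
    match n with
    | 0 => linarith
    | 1 => linarith
    | n + 2 =>
      have := hBx (n + 1) (by omega)
      have := le_abs_self B
      linarith
  refine ⟨2 * ((R + ‖xb‖) * (2 * R)) + (2 * R) ^ 2, by positivity, ‖u i - xb‖ ^ 2,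
    by positivity, ?_⟩
  intro n hn
  obtain ⟨ha0, ha1⟩ := hα_range n
  obtain ⟨ht0, ht1⟩ := hθ_range n
  have e1 : ‖w n (i + 1) - xb‖ ^ 2
      ≤ α n * ‖u i - xb‖ ^ 2 + (1 - α n) * ‖T i (y n i) - xb‖ ^ 2 := by
    have : w n (i + 1) - xb = α n • (u i - xb) + (1 - α n) • (T i (y n i) - xb) := by
      rw [hw n hn i hi]
      module
    rw [this]
    exact aux_convex _ _ _ ha0.le ha1
  have e2 := mul_le_mul_of_nonneg_left (hfirm n i hi) (by linarith : 0 ≤ 1 - α n)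
  have e3 : 0 ≤ α n * ‖y n i - xb‖ ^ 2 := by positivity
  have e4 := aux_prox (f i) (hf_conv i hi) (lam n) (hlam_pos n) _ _ xb (hy n hn i hi)
  have e5 : @inner ℝ H _ (z n + lam n • d (n+1) i - y n i) (xb - y n i)
      = @inner ℝ H _ (z n - y n i) (xb - y n i)
        - lam n * @inner ℝ H _ (d (n+1) i) (y n i - xb) := by
    have : z n + lam n • d (n+1) i - y n i = (z n - y n i) + lam n • d (n+1) i := by abel
    rw [this, inner_add_left, inner_smul_left, ← neg_sub (y n i) xb, inner_neg_right,
      inner_neg_right]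
    simp only [conj_trivial]
    ring
  have e6 : ‖z n - xb‖ ^ 2 = ‖z n - y n i‖ ^ 2
      - 2 * @inner ℝ H _ (z n - y n i) (xb - y n i) + ‖y n i - xb‖ ^ 2 := by
    have : z n - xb = (z n - y n i) - (xb - y n i) := by abel
    rw [this, norm_sub_sq_real, norm_sub_rev xb]
  have e7 : ‖z n - xb‖ ^ 2 ≤ ‖x n - xb‖ ^ 2
      + θ n * (2 * ((R + ‖xb‖) * (2 * R)) + (2 * R) ^ 2) := by
    have hzz : z n - xb = (x n - xb) + θ n • (x n - x (n-1)) := by rw [hz n hn]; abel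
    rw [hzz, norm_add_sq_real, inner_smul_right, norm_smul, Real.norm_of_nonneg ht0]
    have g1 : ‖x n - x (n-1)‖ ≤ 2 * R := by
      have := norm_sub_le (x n) (x (n-1))
      linarith [hR n, hR (n-1)]
    have g2 : ‖x n - xb‖ ≤ R + ‖xb‖ := by
      have := norm_sub_le (x n) xb
      linarith [hR n]
    have g3 : @inner ℝ H _ (x n - xb) (x n - x (n-1)) ≤ (R + ‖xb‖) * (2 * R) :=
      (real_inner_le_norm _ _).trans (by gcongr)
    have g4 : (θ n * ‖x n - x (n-1)‖) ^ 2 ≤ θ n * (2 * R) ^ 2 := by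
      rw [mul_pow]
      have : θ n ^ 2 ≤ θ n := by nlinarith
      gcongr
    have g5 := mul_le_mul_of_nonneg_left g3 ht0
    linarith
  rw [e5] at e4
  linarith
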